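/- Let (X, T) be an L-fuzzy topological space and G ∈ L^X. Then G is L-fuzzy SP-compact if and only if for every a ∈ M(L) and every strong a-remote family P of G with ⋀_{F∈P} T_sp*(F) ≰ a', there exist a finite subfamily H ⊆ P and b ∈ β*(a) such that H is a strong b-remote family of G. -/

import Mathlib

/-!
For a family `U` put `Φ(U) = ⨅ x, c (G x) ⊔ ⨆ F ∈ U, F x`, and let `cP` be the family of pointwise
complements of the members of `P`. The involution exchanges coprime elements `a` with prime elements
`c a`, and by De Morgan (`strongRemote_iff`) `P` is strong `a`-remote iff `¬ Φ(cP) ≤ c a`. Both sides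
of the equivalence then speak about the same inequality, tested against primes.

If `G` is compact and neither term of the infimum lies below the prime `c a`, primality gives a
finite `Q` with `¬ Φ(Q) ≤ c a`; since a coprime element is the supremum of the coprimes way below it
(`exists_coprime_wayBelow`), this persists at `c b` for some coprime `b ≪ a`. Conversely, if the
inequality defining compactness failed, some prime would separate its two sides
(`exists_prime_separating`), contradicting the remote-family condition at the complement of that
prime.

The order-theoretic core is the existence of enough primes in a completely distributive lattice.
-/

/-!
Common definitions: completely distributive complete lattice `L` with an
order-reversing involution `c`, `L`-subsets `X → L`, the wayBelow relation `≪`,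
coprime/prime elements, `L`-(fuzzy) topologies, closure/interior, (Semi-)Preopen
subsets, the `L`-fuzzy Preopen and Semi-Preopen operators, and the various
compactness / cover / shading / remote-family notions.
-/

variable {L : Type*} [CompletelyDistribLattice L] {X : Type*}

/-- `a ≪ b`: for every subset `D ⊆ L` with `b ≤ sSup D` there is `d ∈ D` with `a ≤ d`. -/
def wayBelow (a b : L) : Prop := ∀ D : Set L, b ≤ sSup D → ∃ d ∈ D, a ≤ d

/-- coprime (non-zero) element of `L`; `M(L)` is the set of such elements. -/
def IsCoprimeElem (a : L) : Prop := a ≠ ⊥ ∧ ∀ p q : L, a ≤ p ⊔ q → a ≤ p ∨ a ≤ q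

/-- prime (non-unit) element of `L`; `P(L)` is the set of such elements. -/
def IsPrimeElem (p : L) : Prop := p ≠ ⊤ ∧ ∀ a b : L, a ⊓ b ≤ p → a ≤ p ∨ b ≤ p

/-- pointwise complement of an `L`-subset via the involution `c`. -/
def pcompl (c : L → L) (A : X → L) : X → L := fun x => c (A x)

/-- `T : L^X → L` is an `L`-fuzzy topology. -/
def IsLFuzzyTopology (T : (X → L) → L) : Prop :=
  T ⊥ = ⊤ ∧ T ⊤ = ⊤ ∧ (∀ A B : X → L, T A ⊓ T B ≤ T (A ⊓ B)) ∧
    (∀ S : Set (X → L), (⨅ A ∈ S, T A) ≤ T (sSup S))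

/-- `τ ⊆ L^X` is an `L`-topology. -/
def IsLTopology (τ : Set (X → L)) : Prop :=
  ⊥ ∈ τ ∧ ⊤ ∈ τ ∧ (∀ S : Set (X → L), S ⊆ τ → sSup S ∈ τ) ∧
    (∀ A B : X → L, A ∈ τ → B ∈ τ → A ⊓ B ∈ τ)

/-- closure in an `L`-topological space: infimum of all closed `L`-subsets above `A`. -/
def lcl (c : L → L) (τ : Set (X → L)) (A : X → L) : X → L :=
  sInf {K : X → L | pcompl c K ∈ τ ∧ A ≤ K}

/-- interior in an `L`-topological space: supremum of all open `L`-subsets below `A`. -/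
def lint (τ : Set (X → L)) (A : X → L) : X → L :=
  sSup {U : X → L | U ∈ τ ∧ U ≤ A}

/-- `A` is Preopen: `A ≤ int (cl A)`. -/
def IsPreopen (c : L → L) (τ : Set (X → L)) (A : X → L) : Prop :=
  A ≤ lint τ (lcl c τ A)

/-- `A` is Semi-Preopen: there is a Preopen `B` with `B ≤ A ≤ cl B`. -/
def IsSemiPreopen (c : L → L) (τ : Set (X → L)) (A : X → L) : Prop :=
  ∃ B : X → L, IsPreopen c τ B ∧ B ≤ A ∧ A ≤ lcl c τ B

/-- the `L`-fuzzy Preopen operator `T_p` induced by `T`. -/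
def preopenOp (c : L → L) (T : (X → L) → L) (A : X → L) : L :=
  ⨅ x : X, ⨅ lam : L, ⨅ _ : wayBelow lam (A x),
    ⨆ B : X → L, ⨆ _ : wayBelow lam (B x),
      (T B ⊓ ⨅ y : X, ⨅ mu : L, ⨅ _ : wayBelow mu (B y),
        ⨅ D : X → L, ⨅ _ : A ≤ D, ⨅ _ : ¬ mu ≤ D y, c (T (pcompl c D)))

/-- the `L`-fuzzy Semi-Preopen operator `T_sp` induced by `T`. -/
def spOp (c : L → L) (T : (X → L) → L) (A : X → L) : L :=
  ⨆ B : X → L, ⨆ _ : B ≤ A,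
    (preopenOp c T B ⊓ ⨅ x : X, ⨅ lam : L, ⨅ _ : wayBelow lam (A x),
      ⨅ D : X → L, ⨅ _ : B ≤ D, ⨅ _ : ¬ lam ≤ D x, c (T (pcompl c D)))

/-- `G` is `L`-fuzzy SP-compact in the `L`-fuzzy topological space `(X, T)`. -/
def LFuzzySPCompact (c : L → L) (T : (X → L) → L) (G : X → L) : Prop :=
  ∀ P : Set (X → L),
    (⨅ F ∈ P, spOp c T F) ⊓ (⨅ x : X, c (G x) ⊔ ⨆ F ∈ P, F x) ≤
      ⨆ Q : Finset (X → L), ⨆ _ : ↑Q ⊆ P, ⨅ x : X, c (G x) ⊔ ⨆ F ∈ Q, F x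

/-- `G` is fuzzy SP-compact in the `L`-topological space `(X, τ)`. -/
def FuzzySPCompact (c : L → L) (τ : Set (X → L)) (G : X → L) : Prop :=
  ∀ U : Set (X → L), (∀ A ∈ U, IsSemiPreopen c τ A) →
    (⨅ x : X, c (G x) ⊔ ⨆ A ∈ U, A x) ≤
      ⨆ ψ : Finset (X → L), ⨆ _ : ↑ψ ⊆ U, ⨅ x : X, c (G x) ⊔ ⨆ A ∈ ψ, A x

/-- `U` is a `Q_a`-cover of `G`. -/
def QCover (c : L → L) (a : L) (G : X → L) (U : Set (X → L)) : Prop :=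
  ∀ x : X, a ≤ c (G x) ⊔ ⨆ A ∈ U, A x

/-- `U` is a strong `β_a`-cover of `G`. -/
def StrongBetaCover (c : L → L) (a : L) (G : X → L) (U : Set (X → L)) : Prop :=
  wayBelow a (⨅ x : X, c (G x) ⊔ ⨆ A ∈ U, A x)

/-- `P` is a strong `a`-remote family of `G`. -/
def StrongRemote (a : L) (G : X → L) (P : Set (X → L)) : Prop :=
  ¬ a ≤ ⨆ x : X, G x ⊓ ⨅ B ∈ P, B x

/-- `U` is a strong `a`-shading of `G`. -/
def StrongShading (c : L → L) (a : L) (G : X → L) (U : Set (X → L)) : Prop :=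
  ¬ (⨅ x : X, c (G x) ⊔ ⨆ A ∈ U, A x) ≤ a

/-- `G` is `a`-fuzzy SP-compact in the `L`-topological space `(X, τ)`. -/
def AFuzzySPCompact (c : L → L) (τ : Set (X → L)) (a : L) (G : X → L) : Prop :=
  ∀ b : L, wayBelow b a →
    ∀ U : Set (X → L), (∀ A ∈ U, IsSemiPreopen c τ A) → QCover c a G U →
      ∃ V : Finset (X → L), ↑V ⊆ U ∧ QCover c b G ↑V

/-- Complete distributivity makes every element the supremum of the elements way below it. -/
theorem exists_wayBelow_not_le {y z : L} (h : ¬ y ≤ z) : ∃ x, wayBelow x y ∧ ¬ x ≤ z := by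
  by_contra hcon
  push Not at hcon
  apply h
  -- Distribute the infimum, over all `D` with `y ≤ sSup D`, of the suprema of the `D`.
  have key : y ≤ ⨅ D : {D : Set L // y ≤ sSup D}, ⨆ d : D.1, (d : L) :=
    le_iInf fun D => D.2.trans_eq (sSup_eq_iSup' D.1)
  rw [iInf_iSup_eq] at key
  refine key.trans (iSup_le fun f => hcon _ fun D hD => ?_)
  exact ⟨f ⟨D, hD⟩, (f ⟨D, hD⟩).2, iInf_le (fun D => ((f D : D.1) : L)) ⟨D, hD⟩⟩

theorem wayBelow.le {x y : L} (h : wayBelow x y) : x ≤ y := by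
  obtain ⟨d, hd, hxd⟩ := h {y} (by simp)
  exact hxd.trans_eq hd

/-- Primes separate points. Iterating `exists_wayBelow_not_le` gives a descending sequence `s` from
`y` with `s (n + 1) ≪ s n` and `¬ s n ≤ z`; the up-set it generates is a filter inaccessible by
suprema, and an element above `z` maximal outside that filter is prime. -/
theorem exists_prime_separating {y z : L} (h : ¬ y ≤ z) :
    ∃ p, IsPrimeElem p ∧ z ≤ p ∧ ¬ y ≤ p := by
  choose g hg using fun w : {w : L // ¬ w ≤ z} => exists_wayBelow_not_le w.2
  let s : ℕ → {w : L // ¬ w ≤ z} := fun n => Nat.rec ⟨y, h⟩ (fun _ w => ⟨g w, (hg w).2⟩) n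
  have hs : ∀ n, wayBelow (s (n + 1)).1 (s n).1 := fun n => (hg (s n)).1
  have hanti : Antitone fun n => (s n).1 := antitone_nat_of_succ_le fun n => (hs n).le
  obtain ⟨p, hzp, hp⟩ := zorn_le_nonempty₀ {q : L | ∀ n, ¬ (s n).1 ≤ q} (by
    intro C hC _ w hw
    refine ⟨sSup C, fun n hn => ?_, fun q hq => le_sSup hq⟩
    obtain ⟨d, hd, hle⟩ := hs n C hn
    exact hC hd (n + 1) hle) z (fun n => (s n).2)
  refine ⟨p, ⟨fun htop => hp.prop 0 (htop ▸ le_top), fun a b hab => ?_⟩, hzp, hp.prop 0⟩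
  by_contra! hcon
  -- By maximality, `p ⊔ e` lies in the filter as soon as `e` is not below `p`.
  have aux : ∀ e, ¬ e ≤ p → ∃ n, (s n).1 ≤ p ⊔ e := fun e he => by
    by_contra! hn
    exact he (le_sup_right.trans (hp.le_of_ge hn le_sup_left))
  obtain ⟨m, hm⟩ := aux a hcon.1
  obtain ⟨n, hn⟩ := aux b hcon.2
  refine hp.prop (max m n) ?_
  have h1 : (s (max m n)).1 ≤ (p ⊔ a) ⊓ (p ⊔ b) :=
    le_inf ((hanti (le_max_left m n)).trans hm) ((hanti (le_max_right m n)).trans hn)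
  rw [← sup_inf_left] at h1
  exact h1.trans (sup_le le_rfl hab)

/-- The involution `c` as an order isomorphism onto the dual lattice. -/
def involutionIso (c : L → L) (hc_inv : ∀ a : L, c (c a) = a)
    (hc_anti : ∀ a b : L, a ≤ b → c b ≤ c a) : L ≃o Lᵒᵈ where
  toFun a := OrderDual.toDual (c a)
  invFun a := c (OrderDual.ofDual a)
  left_inv := hc_inv
  right_inv := hc_inv
  map_rel_iff' {a b} := by
    refine ⟨fun h => ?_, hc_anti a b⟩
    simpa only [hc_inv] using hc_anti _ _ (show c b ≤ c a from h)

theorem IsCoprimeElem.compl {c : L → L} (hc_inv : ∀ a : L, c (c a) = a)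
    (hc_anti : ∀ a b : L, a ≤ b → c b ≤ c a) {a : L} (ha : IsCoprimeElem a) :
    IsPrimeElem (c a) := by
  let e := involutionIso c hc_inv hc_anti
  refine ⟨fun h => ha.1 (le_bot_iff.1 ?_), fun x y hxy => ?_⟩
  · have := hc_anti (c ⊥) (c a) (h ▸ le_top)
    rwa [hc_inv, hc_inv] at this
  · have hinf : c (x ⊓ y) = c x ⊔ c y := e.map_inf x y
    have h1 := hc_anti _ _ hxy
    rw [hc_inv, hinf] at h1
    refine (ha.2 _ _ h1).imp (fun h => ?_) (fun h => ?_) <;>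
      simpa only [hc_inv] using hc_anti _ _ h

theorem IsPrimeElem.compl {c : L → L} (hc_inv : ∀ a : L, c (c a) = a)
    (hc_anti : ∀ a b : L, a ≤ b → c b ≤ c a) {p : L} (hp : IsPrimeElem p) :
    IsCoprimeElem (c p) := by
  let e := involutionIso c hc_inv hc_anti
  refine ⟨fun h => hp.1 (top_le_iff.1 ?_), fun x y hxy => ?_⟩
  · have := hc_anti (c p) (c ⊤) (h ▸ bot_le)
    rwa [hc_inv, hc_inv] at this
  · have hsup : c (x ⊔ y) = c x ⊓ c y := e.map_sup x y
    have h1 := hc_anti _ _ hxy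
    rw [hc_inv, hsup] at h1
    refine (hp.2 _ _ h1).imp (fun h => ?_) (fun h => ?_) <;>
      simpa only [hc_inv] using hc_anti _ _ h

/-- Every element is the supremum of the coprimes way below it. -/
theorem exists_coprime_wayBelow {c : L → L} (hc_inv : ∀ a : L, c (c a) = a)
    (hc_anti : ∀ a b : L, a ≤ b → c b ≤ c a) {a z : L} (h : ¬ a ≤ z) :
    ∃ b, wayBelow b a ∧ IsCoprimeElem b ∧ ¬ b ≤ z := by
  obtain ⟨y, hya, hyz⟩ := exists_wayBelow_not_le h
  have hc : ¬ c z ≤ c y := fun h' => hyz (by simpa only [hc_inv] using hc_anti _ _ h')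
  obtain ⟨p, hp, hyp, hzp⟩ := exists_prime_separating hc
  have hpy : c p ≤ y := by simpa only [hc_inv] using hc_anti _ _ hyp
  refine ⟨c p, fun D hD => (hya D hD).imp fun _ hd => ⟨hd.1, hpy.trans hd.2⟩,
    hp.compl hc_inv hc_anti, fun h' => hzp ?_⟩
  simpa only [hc_inv] using hc_anti _ _ h'

/-- De Morgan: remote families are complements of shadings. -/
theorem strongRemote_iff {c : L → L} (hc_inv : ∀ a : L, c (c a) = a)
    (hc_anti : ∀ a b : L, a ≤ b → c b ≤ c a) (a : L) (G : X → L) (P : Set (X → L)) :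
    StrongRemote a G P ↔ StrongShading c (c a) G (pcompl c '' P) := by
  let e := involutionIso c hc_inv hc_anti
  have hinf : ∀ x y, c (x ⊓ y) = c x ⊔ c y := fun x y => e.map_inf x y
  have hiSup : ∀ (f : X → L), c (⨆ i, f i) = ⨅ i, c (f i) :=
    fun f => e.map_iSup f
  have hbInf : ∀ f : (X → L) → L, c (⨅ B ∈ P, f B) = ⨆ B ∈ P, c (f B) :=
    fun f => e.map_iInf₂ fun B (_ : B ∈ P) => f B
  have key : (⨅ x : X, c (G x) ⊔ ⨆ A ∈ pcompl c '' P, A x) =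
      c (⨆ x : X, G x ⊓ ⨅ B ∈ P, B x) := by
    simp only [iSup_image, pcompl]
    rw [hiSup]
    refine iInf_congr fun x => ?_
    rw [hinf, hbInf]
  unfold StrongRemote StrongShading
  rw [key, not_iff_not]
  exact ⟨hc_anti _ _, fun h => by simpa only [hc_inv] using hc_anti _ _ h⟩

theorem pcompl_pcompl {M Y : Type*} {c : M → M} (hc_inv : ∀ a : M, c (c a) = a) (A : Y → M) :
    pcompl c (pcompl c A) = A := funext fun _ => hc_inv _

theorem stmt6 (c : L → L) (hc_inv : ∀ a : L, c (c a) = a)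
    (hc_anti : ∀ a b : L, a ≤ b → c b ≤ c a) (T : (X → L) → L) (hT : IsLFuzzyTopology T) (G : X → L) :
    LFuzzySPCompact c T G ↔
      ∀ a : L, IsCoprimeElem a → ∀ P : Set (X → L), StrongRemote a G P →
        ¬ (⨅ F ∈ P, spOp c T (pcompl c F)) ≤ c a →
          ∃ H : Finset (X → L), ↑H ⊆ P ∧
            ∃ b : L, wayBelow b a ∧ IsCoprimeElem b ∧ StrongRemote b G ↑H := by
  classical
  have himage : ∀ U : Set (X → L), pcompl c '' (pcompl c '' U) = U := fun U => by
    simp [Set.image_image, pcompl_pcompl hc_inv]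
  constructor
  · intro hG a ha P hP hT_P
    rw [strongRemote_iff hc_inv hc_anti] at hP
    have hnot : ¬ (⨅ F ∈ pcompl c '' P, spOp c T F) ⊓
        (⨅ x : X, c (G x) ⊔ ⨆ F ∈ pcompl c '' P, F x) ≤ c a := fun h =>
      ((ha.compl hc_inv hc_anti).2 _ _ h).elim (fun h => hT_P (by rwa [iInf_image] at h)) hP
    -- Some finite `Q ⊆ cP` has `¬ Φ(Q) ≤ c a`, that is, `¬ a ≤ c Φ(Q)`.
    obtain ⟨Q, hQP, hQ⟩ : ∃ Q : Finset (X → L), ↑Q ⊆ pcompl c '' P ∧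
        ¬ (⨅ x : X, c (G x) ⊔ ⨆ F ∈ Q, F x) ≤ c a := by
      by_contra! hcon
      exact hnot ((hG _).trans (iSup₂_le hcon))
    obtain ⟨b, hba, hb, hbQ⟩ := exists_coprime_wayBelow hc_inv hc_anti
      (fun h => hQ (by simpa only [hc_inv] using hc_anti _ _ h) :
        ¬ a ≤ c (⨅ x : X, c (G x) ⊔ ⨆ F ∈ Q, F x))
    refine ⟨Q.image (pcompl c), ?_, b, hba, hb, ?_⟩
    · rw [Finset.coe_image, ← himage P]
      exact Set.image_mono hQP
    · rw [strongRemote_iff hc_inv hc_anti, Finset.coe_image, himage]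
      exact fun h => hbQ (by simpa only [hc_inv, Finset.mem_coe] using hc_anti _ _ h)
  · intro h P
    by_contra hcon
    obtain ⟨p, hp, hle, hnle⟩ := exists_prime_separating hcon
    obtain ⟨H, hHP, b, hba, -, hbH⟩ := h (c p) (hp.compl hc_inv hc_anti) (pcompl c '' P)
      (by
        rw [strongRemote_iff hc_inv hc_anti, himage, hc_inv]
        exact fun h' => hnle (inf_le_right.trans h'))
      (by
        rw [hc_inv, iInf_image]
        simp only [pcompl_pcompl hc_inv]
        exact fun h' => hnle (inf_le_left.trans h'))
    rw [strongRemote_iff hc_inv hc_anti, ← Finset.coe_image] at hbH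
    refine hbH (le_trans ?_ (show p ≤ c b from ?_))
    · refine le_trans ?_ hle
      refine le_iSup₂_of_le (H.image (pcompl c)) ?_ le_rfl
      rw [Finset.coe_image, ← himage P]
      exact Set.image_mono hHP
    · simpa only [hc_inv] using hc_anti _ _ hba.le
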